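/- arXiv:2005.08166 — 3 statements merged into one kernel-verified Lean document; each statement's English description precedes it below -/
import Mathlib

section
/- Let 𝔥 ⊆ so(r,s) be a subalgebra satisfying one of the following conditions: (i) 𝔥 is a proper subalgebra of so(r,s) acting irreducibly on ℝ^{r,s}; (ii) 𝔥 preserves a proper nondegenerate subspace of ℝ^{r,s}; (iii) the form is definite (s = 0 or r = 0) and 𝔥 is an arbitrary proper subalgebra of so(n) where n = r + s. Then the first prolongation (𝔥 ⊕ ℝ·id_{ℝ^{r,s}})^{(1)} is zero. -/
open Module

noncomputable section

namespace Weyl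

variable {V : Type*} [AddCommGroup V] [Module ℝ V]

/-- The endomorphism `X ∧ Y : Z ↦ B(X,Z)•Y − B(Y,Z)•X`. -/
def wedge (B : LinearMap.BilinForm ℝ V) (X Y : V) : Module.End ℝ V where
  toFun Z := B X Z • Y - B Y Z • X
  map_add' z z' := by simp only [map_add, add_smul]; abel
  map_smul' c z := by simp only [map_smul, smul_eq_mul, RingHom.id_apply, mul_smul, smul_sub]

/-- The Lie algebra `so(B)` of endomorphisms skew-symmetric with respect to `B`. -/
def soSet (B : LinearMap.BilinForm ℝ V) : Set (Module.End ℝ V) :=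
  {A | ∀ x y, B (A x) y + B x (A y) = 0}

/-- The conformal Lie algebra `co(B) = ℝ·id ⊕ so(B)`. -/
def coSet (B : LinearMap.BilinForm ℝ V) : Set (Module.End ℝ V) :=
  {F | ∃ c : ℝ, ∃ S ∈ soSet B, F = c • (1 : Module.End ℝ V) + S}

/-- The first prolongation `g^{(1)}` of a set of endomorphisms:
linear maps `φ : V → g` with `φ(X)Y = φ(Y)X`. -/
def firstProlong (g : Set (Module.End ℝ V)) : Set (V →ₗ[ℝ] Module.End ℝ V) :=
  {φ | (∀ x, φ x ∈ g) ∧ ∀ x y, φ x y = φ y x}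

/-- `R` is an algebraic curvature tensor of type `g` (a linear map on `Λ²V`,
encoded as an antisymmetric bilinear map, with values in `g`, satisfying the
Bianchi identity). -/
def IsCurv (g : Set (Module.End ℝ V)) (R : V →ₗ[ℝ] V →ₗ[ℝ] Module.End ℝ V) : Prop :=
  (∀ x y, R x y = - R y x) ∧ (∀ x y, R x y ∈ g) ∧
    ∀ x y z, R x y z + R y z x + R z x y = 0

/-- `L(ℛ(g))`: the span of all values of algebraic curvature tensors of type `g`. -/
def curvSpan (g : Set (Module.End ℝ V)) : Submodule ℝ (Module.End ℝ V) :=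
  Submodule.span ℝ {F | ∃ R, IsCurv g R ∧ ∃ x y, F = R x y}

/-- `g` is a Berger algebra: `L(ℛ(g)) = g`. -/
def IsBerger (g : Set (Module.End ℝ V)) : Prop :=
  (curvSpan g : Set (Module.End ℝ V)) = g

/-- `g` is (the underlying set of) a Lie subalgebra of `gl(V)`. -/
def IsLieSub (g : Set (Module.End ℝ V)) : Prop :=
  (0 : Module.End ℝ V) ∈ g ∧ (∀ F ∈ g, ∀ F' ∈ g, F + F' ∈ g) ∧
    (∀ (c : ℝ), ∀ F ∈ g, c • F ∈ g) ∧ ∀ F ∈ g, ∀ F' ∈ g, F * F' - F' * F ∈ g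

/-- The subspace `W` is invariant under every element of `g`. -/
def Invariant (g : Set (Module.End ℝ V)) (W : Submodule ℝ V) : Prop :=
  ∀ F ∈ g, ∀ x ∈ W, F x ∈ W

/-- The restriction of `B` to `W` is nondegenerate. -/
def IsNondegOn (B : LinearMap.BilinForm ℝ V) (W : Submodule ℝ V) : Prop :=
  ∀ x ∈ W, (∀ y ∈ W, B x y = 0) → x = 0

/-- Weak irreducibility: no proper nonzero invariant nondegenerate subspace. -/
def WeaklyIrred (B : LinearMap.BilinForm ℝ V) (g : Set (Module.End ℝ V)) : Prop :=
  ∀ W : Submodule ℝ V, Invariant g W → IsNondegOn B W → W = ⊥ ∨ W = ⊤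

/-- Irreducibility: no proper nonzero invariant subspace. -/
def Irred (g : Set (Module.End ℝ V)) : Prop :=
  ∀ W : Submodule ℝ V, Invariant g W → W = ⊥ ∨ W = ⊤

/-- The standard nondegenerate symmetric bilinear form of signature `(r,s)` on
`ℝ^{r,s} = Fin (r+s) → ℝ` (the first `r` coordinates are timelike). -/
def psForm (r s : ℕ) : LinearMap.BilinForm ℝ (Fin (r + s) → ℝ) :=
  LinearMap.mk₂ ℝ
    (fun x y => ∑ i : Fin (r + s), (if (i : ℕ) < r then (-1 : ℝ) else 1) * (x i * y i))
    (fun x x' y => by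
      simp only [Pi.add_apply, add_mul, mul_add, Finset.sum_add_distrib])
    (fun c x y => by
      simp only [Pi.smul_apply, smul_eq_mul, Finset.mul_sum]
      exact Finset.sum_congr rfl fun i _ => by ring)
    (fun x y y' => by
      simp only [Pi.add_apply, add_mul, mul_add, Finset.sum_add_distrib])
    (fun c x y => by
      simp only [Pi.smul_apply, smul_eq_mul, Finset.mul_sum]
      exact Finset.sum_congr rfl fun i _ => by ring)

/-- The sign of the `i`-th basis vector. -/
def eps (r s : ℕ) (i : Fin (r + s)) : ℝ := if (i : ℕ) < r then (-1 : ℝ) else 1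

/-- The standard basis vector. -/
def ee (r s : ℕ) (i : Fin (r + s)) : Fin (r + s) → ℝ := Pi.single i 1

theorem eps_mul_self (r s : ℕ) (i : Fin (r + s)) : eps r s i * eps r s i = 1 := by
  unfold eps; split_ifs <;> norm_num

theorem psForm_apply (r s : ℕ) (x y : Fin (r + s) → ℝ) :
    psForm r s x y = ∑ i : Fin (r + s), eps r s i * (x i * y i) := rfl

theorem psForm_comm (r s : ℕ) (x y : Fin (r + s) → ℝ) :
    psForm r s x y = psForm r s y x := by
  simp only [psForm_apply, mul_comm]

theorem psForm_ee (r s : ℕ) (i : Fin (r + s)) (y : Fin (r + s) → ℝ) :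
    psForm r s (ee r s i) y = eps r s i * y i := by
  simp [psForm_apply, ee, Pi.single_apply]

theorem psForm_nondeg (r s : ℕ) (x : Fin (r + s) → ℝ)
    (hx : ∀ y, psForm r s y x = 0) : x = 0 := by
  funext i
  have h1 := hx (ee r s i)
  rw [psForm_ee] at h1
  have h2 := eps_mul_self r s i
  have : x i = eps r s i * (eps r s i * x i) := by rw [← mul_assoc, h2, one_mul]
  rw [this, h1]; simp

theorem expand_ee (r s : ℕ) (y : Fin (r + s) → ℝ) :
    ∑ i, y i • ee r s i = y := by
  funext j
  simp [ee, Finset.sum_apply, Pi.single_apply]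

theorem wedge_apply {V : Type*} [AddCommGroup V] [Module ℝ V]
    (B : LinearMap.BilinForm ℝ V) (X Y Z : V) :
    wedge B X Y Z = B X Z • Y - B Y Z • X := rfl

theorem so_eq_sum_wedge (r s : ℕ) (A : Module.End ℝ (Fin (r + s) → ℝ))
    (hA : A ∈ soSet (psForm r s)) :
    A = (1 / 2 : ℝ) • ∑ i, eps r s i • wedge (psForm r s) (ee r s i) (A (ee r s i)) := by
  have key : ∑ i, eps r s i • wedge (psForm r s) (ee r s i) (A (ee r s i)) = A + A := by
    refine LinearMap.ext fun Z => ?_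
    have h1 : ∀ i, (eps r s i • wedge (psForm r s) (ee r s i) (A (ee r s i))) Z
        = Z i • A (ee r s i) + (A Z) i • ee r s i := by
      intro i
      have h2 := hA (ee r s i) Z
      have h3 : psForm r s (A (ee r s i)) Z = - (eps r s i * (A Z) i) := by
        rw [← psForm_ee]; linarith
      rw [LinearMap.smul_apply, wedge_apply, psForm_ee, h3, neg_smul, sub_neg_eq_add, smul_add,
        smul_smul, smul_smul, ← mul_assoc, ← mul_assoc, eps_mul_self, one_mul, one_mul]
    rw [LinearMap.sum_apply, Finset.sum_congr rfl fun i _ => h1 i, Finset.sum_add_distrib,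
      expand_ee, LinearMap.add_apply]
    congr 1
    conv_rhs => rw [← expand_ee r s Z, map_sum]
    simp only [map_smul]
  rw [key, ← two_smul ℝ A, smul_smul]
  norm_num

/-- The subspace of all `T` with `T ∧ X ∈ h` for all `X`. -/
def wedgeSub (r s : ℕ) (h : Set (Module.End ℝ (Fin (r + s) → ℝ))) (hsub : IsLieSub h) :
    Submodule ℝ (Fin (r + s) → ℝ) where
  carrier := {T | ∀ X, wedge (psForm r s) T X ∈ h}
  zero_mem' := fun X => by
    have : wedge (psForm r s) 0 X = 0 := by
      refine LinearMap.ext fun Z => ?_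
      simp [wedge_apply]
    rw [this]; exact hsub.1
  add_mem' := fun {a b} ha hb X => by
    have : wedge (psForm r s) (a + b) X = wedge (psForm r s) a X + wedge (psForm r s) b X := by
      refine LinearMap.ext fun Z => ?_
      simp only [wedge_apply, LinearMap.add_apply, map_add, add_smul, smul_add]
      abel
    rw [this]; exact hsub.2.1 _ (ha X) _ (hb X)
  smul_mem' := fun c a ha X => by
    have : wedge (psForm r s) (c • a) X = c • wedge (psForm r s) a X := by
      refine LinearMap.ext fun Z => ?_
      simp only [wedge_apply, LinearMap.smul_apply, map_smul, smul_sub, smul_smul, smul_eq_mul]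
      rw [mul_comm c (psForm r s X Z)]
    rw [this]; exact hsub.2.2.1 _ _ (ha X)

theorem wedgeSub_invariant (r s : ℕ) (h : Set (Module.End ℝ (Fin (r + s) → ℝ)))
    (hsub : IsLieSub h) (hso : h ⊆ soSet (psForm r s)) :
    Invariant h (wedgeSub r s h hsub) := by
  intro A hA T hT X
  have hb := hsub.2.2.2 A hA _ (hT X)
  have hc := hsub.2.2.1 (-1) _ (hT (A X))
  have hd := hsub.2.1 _ hb _ hc
  convert hd using 1
  refine LinearMap.ext fun Z => ?_
  have h1 := hso hA T Z
  have h2 := hso hA X Z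
  have h1' : psForm r s (A T) Z = - psForm r s T (A Z) := by linarith
  have h2' : psForm r s (A X) Z = - psForm r s X (A Z) := by linarith
  simp only [wedge_apply, LinearMap.add_apply, LinearMap.sub_apply, LinearMap.smul_apply,
    Module.End.mul_apply, map_sub, map_smul, h1', h2']
  module

theorem eq_so_of_wedgeSub_top (r s : ℕ) (h : Set (Module.End ℝ (Fin (r + s) → ℝ)))
    (hsub : IsLieSub h) (hso : h ⊆ soSet (psForm r s)) (htop : wedgeSub r s h hsub = ⊤) :
    h = soSet (psForm r s) := by
  refine Set.Subset.antisymm hso fun A hA => ?_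
  rw [so_eq_sum_wedge r s A hA]
  refine hsub.2.2.1 _ _ ?_
  refine Finset.sum_induction _ (fun F => F ∈ h) (fun a b ha hb => hsub.2.1 a ha b hb)
    hsub.1 fun i _ => hsub.2.2.1 _ _ ?_
  have : ee r s i ∈ wedgeSub r s h hsub := by rw [htop]; trivial
  exact this _

theorem wedgeSub_bot_of_nondeg (r s : ℕ) (h : Set (Module.End ℝ (Fin (r + s) → ℝ)))
    (hsub : IsLieSub h) (W : Submodule ℝ (Fin (r + s) → ℝ)) (hbot : W ≠ ⊥) (htop : W ≠ ⊤)
    (hnd : IsNondegOn (psForm r s) W) (hinv : Invariant h W) (T : Fin (r + s) → ℝ)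
    (hT : T ∈ wedgeSub r s h hsub) : T = 0 := by
  have hrefl : (psForm r s).IsRefl := fun x y hxy => by rw [psForm_comm]; exact hxy
  have hres : ((psForm r s).restrict W).Nondegenerate := by
    constructor
    · intro x hx
      exact Subtype.ext (hnd x x.2 fun y hy => hx ⟨y, hy⟩)
    · intro x hx
      refine Subtype.ext (hnd x x.2 fun y hy => ?_)
      rw [psForm_comm]; exact hx ⟨y, hy⟩
  have horth : (psForm r s).orthogonal W ≠ ⊥ := fun hb =>
    htop (LinearMap.BilinForm.eq_top_of_restrict_nondegenerate_of_orthogonal_eq_bot hrefl hres hb)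
  obtain ⟨X, hX, hX0⟩ := Submodule.exists_mem_ne_zero_of_ne_bot horth
  obtain ⟨w, hw, hw0⟩ := Submodule.exists_mem_ne_zero_of_ne_bot hbot
  have hTW : ∀ z ∈ W, psForm r s T z = 0 := by
    intro z hz
    have h1 := hinv _ (hT X) z hz
    have hXz : psForm r s X z = 0 := by rw [psForm_comm]; exact hX z hz
    rw [wedge_apply, hXz, zero_smul, sub_zero] at h1
    have h2 : psForm r s T z • X = 0 := by
      refine hnd _ h1 fun y hy => ?_
      have : psForm r s X y = 0 := by rw [psForm_comm]; exact hX y hy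
      simp [this]
    exact (smul_eq_zero.mp h2).resolve_right hX0
  have hTm : T ∈ W := by
    have : ∃ y, psForm r s y w ≠ 0 := by
      by_contra hcon
      push Not at hcon
      exact hw0 (psForm_nondeg r s w hcon)
    obtain ⟨y, hy⟩ := this
    have h1 := hinv _ (hT y) w hw
    rw [wedge_apply, hTW w hw, zero_smul, zero_sub] at h1
    exact (W.smul_mem_iff hy).mp (W.neg_mem_iff.mp h1)
  exact hnd T hTm hTW

theorem nondegOn_of_definite (r s : ℕ) (hrs : s = 0 ∨ r = 0)
    (W : Submodule ℝ (Fin (r + s) → ℝ)) : IsNondegOn (psForm r s) W := by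
  intro x hx hxy
  have h0 := hxy x hx
  have hc : ∃ c : ℝ, c ≠ 0 ∧ ∀ i, eps r s i = c := by
    rcases hrs with rfl | rfl
    · refine ⟨-1, by norm_num, fun i => ?_⟩
      have := i.2
      simp only [eps]; rw [if_pos (by omega)]
    · exact ⟨1, by norm_num, fun i => by simp [eps]⟩
  obtain ⟨c, hc, hce⟩ := hc
  simp only [psForm_apply, hce, ← Finset.mul_sum] at h0
  have h1 := (mul_eq_zero.mp h0).resolve_left hc
  rw [Finset.sum_eq_zero_iff_of_nonneg fun i _ => mul_self_nonneg _] at h1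
  funext i
  exact mul_self_eq_zero.mp (h1 i (Finset.mem_univ i))

theorem wedgeSub_eq_zero (r s : ℕ)
    (h : Set (Module.End ℝ (Fin (r + s) → ℝ)))
    (hsub : IsLieSub h) (hso : h ⊆ soSet (psForm r s))
    (hcond :
      (h ≠ soSet (psForm r s) ∧ Irred h) ∨
      (∃ W : Submodule ℝ (Fin (r + s) → ℝ), W ≠ ⊥ ∧ W ≠ ⊤ ∧
        IsNondegOn (psForm r s) W ∧ Invariant h W) ∨
      ((s = 0 ∨ r = 0) ∧ h ≠ soSet (psForm r s)))
    (T : Fin (r + s) → ℝ) (hT : T ∈ wedgeSub r s h hsub) : T = 0 := by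
  have hinv := wedgeSub_invariant r s h hsub hso
  rcases hcond with ⟨hne, hirr⟩ | ⟨W, hb, ht, hnd, hW⟩ | ⟨hrs, hne⟩
  · rcases hirr _ hinv with hb | ht
    · rw [hb] at hT; exact hT
    · exact absurd (eq_so_of_wedgeSub_top r s h hsub hso ht) hne
  · exact wedgeSub_bot_of_nondeg r s h hsub W hb ht hnd hW T hT
  · by_cases hb : wedgeSub r s h hsub = ⊥
    · rw [hb] at hT; exact hT
    · by_cases ht : wedgeSub r s h hsub = ⊤
      · exact absurd (eq_so_of_wedgeSub_top r s h hsub hso ht) hne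
      · exact wedgeSub_bot_of_nondeg r s h hsub _ hb ht (nondegOn_of_definite r s hrs _) hinv T hT

/-- If `𝔥 ⊆ so(r,s)` is a subalgebra that is either (i) proper and irreducible,
or (ii) preserves a proper nondegenerate subspace, or (iii) the form is definite
and `𝔥` is an arbitrary proper subalgebra, then `(𝔥 ⊕ ℝ·id)^{(1)} = 0`. -/
theorem first_prolongation_zero (r s : ℕ)
    (h : Set (Module.End ℝ (Fin (r + s) → ℝ)))
    (hsub : IsLieSub h) (hso : h ⊆ soSet (psForm r s))
    (hcond :
      (h ≠ soSet (psForm r s) ∧ Irred h) ∨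
      (∃ W : Submodule ℝ (Fin (r + s) → ℝ), W ≠ ⊥ ∧ W ≠ ⊤ ∧
        IsNondegOn (psForm r s) W ∧ Invariant h W) ∨
      ((s = 0 ∨ r = 0) ∧ h ≠ soSet (psForm r s))) :
    firstProlong
        {F | ∃ c : ℝ, ∃ A ∈ h, F = c • (1 : Module.End ℝ (Fin (r + s) → ℝ)) + A}
      = {0} := by
  refine Set.eq_singleton_iff_unique_mem.mpr ⟨⟨fun x => ⟨0, 0, hsub.1, by simp⟩, by simp⟩, ?_⟩
  rintro φ ⟨hmem, hsymm⟩
  choose c A hA hφ using hmem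
  by_cases hn : Nonempty (Fin (r + s))
  swap
  · refine LinearMap.ext fun x => LinearMap.ext fun y => funext fun i => ?_
    exact absurd ⟨i⟩ hn
  obtain ⟨i₀⟩ := hn
  have hφ' : ∀ x y, φ x y = c x • y + A x y := fun x y => by rw [hφ x]; rfl
  have skew : ∀ x y z, psForm r s (A x y) z + psForm r s (A x z) y = 0 := fun x y z => by
    have := hso (hA x) y z
    rwa [psForm_comm r s y] at this
  have sym : ∀ x y z, c x * psForm r s y z + psForm r s (A x y) z
      = c y * psForm r s x z + psForm r s (A y x) z := fun x y z => by
    have := congrArg (fun v => psForm r s v z) (hsymm x y)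
    simpa [hφ'] using this
  have main : ∀ x y z, psForm r s (A x y) z = c y * psForm r s x z - c z * psForm r s x y := by
    intro x y z
    have a1 := skew x y z
    have a2 := skew y x z
    have a3 := skew z x y
    have b1 := sym x y z
    have b2 := sym x z y
    have b3 := sym y z x
    rw [psForm_comm r s z y] at b2
    rw [psForm_comm r s z x, psForm_comm r s y x] at b3
    linarith
  -- linearity of `c`
  have hc : ∀ x, c x = eps r s i₀ * psForm r s (ee r s i₀) (φ x (ee r s i₀)) := by
    intro x
    have h1 := skew x (ee r s i₀) (ee r s i₀)
    have h2 : psForm r s (A x (ee r s i₀)) (ee r s i₀) = 0 := by linarith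
    rw [hφ', map_add, map_smul, psForm_comm r s _ (A x _), h2, psForm_ee]
    have h3 := eps_mul_self r s i₀
    simp only [ee, Pi.single_eq_same, smul_eq_mul]
    linear_combination -(c x) * h3
  have cadd : ∀ x y, c (x + y) = c x + c y := fun x y => by
    simp only [hc, map_add, LinearMap.add_apply, mul_add]
  have csmul : ∀ (t : ℝ) x, c (t • x) = t * c x := fun t x => by
    simp only [hc, map_smul, LinearMap.smul_apply, smul_eq_mul]; ring
  let C : (Fin (r + s) → ℝ) →ₗ[ℝ] ℝ :=
    { toFun := c, map_add' := cadd, map_smul' := csmul }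
  have hT : ∃ T, ∀ z, psForm r s T z = c z := by
    refine ⟨∑ i, (eps r s i * c (ee r s i)) • ee r s i, fun z => ?_⟩
    have h1 : c z = ∑ i, z i * c (ee r s i) := by
      have : C (∑ i, z i • ee r s i) = ∑ i, z i * C (ee r s i) := by
        simp only [map_sum, map_smul, smul_eq_mul]
      rw [expand_ee] at this
      exact this
    rw [h1, map_sum, LinearMap.sum_apply]
    refine Finset.sum_congr rfl fun i _ => ?_
    rw [map_smul, LinearMap.smul_apply, psForm_ee, smul_eq_mul]
    have h3 := eps_mul_self r s i
    linear_combination (c (ee r s i) * z i) * h3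
  obtain ⟨T, hT⟩ := hT
  have hAT : ∀ x, A x = wedge (psForm r s) T x := by
    intro x
    refine LinearMap.ext fun y => ?_
    rw [← sub_eq_zero]
    refine psForm_nondeg r s _ fun z => ?_
    rw [psForm_comm, wedge_apply]
    simp only [map_sub, map_smul, LinearMap.sub_apply, LinearMap.smul_apply, main, hT, smul_eq_mul]
    ring
  have hT0 : T = 0 := wedgeSub_eq_zero r s h hsub hso hcond T fun X => hAT X ▸ hA X
  refine LinearMap.ext fun x => LinearMap.ext fun y => ?_
  rw [hφ', ← hT, hAT, wedge_apply, hT0]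
  simp

end Weyl
end
end

section
/- Let V be a pseudo-Euclidean space with a nontrivial orthogonal decomposition V = V₁ ⊕ V₂ into nonzero nondegenerate subspaces. Let 𝔥₁ ⊆ so(V₁) be a subalgebra satisfying one of: (i) 𝔥₁ is a proper irreducible subalgebra of so(V₁); (ii) 𝔥₁ preserves a proper nondegenerate subspace of V₁; (iii) V₁ is Euclidean and 𝔥₁ is a proper subalgebra of so(V₁). Let 𝔥₂ ⊆ so(V₂) be an arbitrary subalgebra. Then ℛ(𝔥₁ ⊕ 𝔥₂ ⊕ ℝ·id_V) = ℛ(𝔥₁ ⊕ 𝔥₂); in particular L(ℛ(𝔥₁ ⊕ 𝔥₂ ⊕ ℝ·id_V)) ⊆ 𝔥₁ ⊕ 𝔥₂ and 𝔥₁ ⊕ 𝔥₂ ⊕ ℝ·id_V ⊆ co(V) is not a Berger algebra. -/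
open Module

noncomputable section

namespace Weyl

variable {V : Type*} [AddCommGroup V] [Module ℝ V]

/-- `so(W)` regarded as a subalgebra of `so(V)`: skew-symmetric endomorphisms
preserving `W` and acting by zero on the complementary summand `W'`. -/
def soPart (B : LinearMap.BilinForm ℝ V) (W W' : Submodule ℝ V) :
    Set (Module.End ℝ V) :=
  {A | A ∈ soSet B ∧ (∀ x ∈ W, A x ∈ W) ∧ ∀ y ∈ W', A y = 0}


/-! ### Auxiliary lemmas -/

lemma wedge_app (B : LinearMap.BilinForm ℝ V) (X Y Z : V) :
    wedge B X Y Z = B X Z • Y - B Y Z • X := rfl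

lemma exists_nonnull (B : LinearMap.BilinForm ℝ V) (hsymm : ∀ x y, B x y = B y x)
    (W : Submodule ℝ V) (hW : W ≠ ⊥) (hnd : IsNondegOn B W) : ∃ z ∈ W, B z z ≠ 0 := by
  by_contra! h
  apply hW
  rw [Submodule.eq_bot_iff]
  intro x hx
  apply hnd x hx
  intro y hy
  have h1 := h (x + y) (W.add_mem hx hy)
  have h2 := h x hx
  have h3 := h y hy
  simp only [map_add, LinearMap.add_apply] at h1
  have := hsymm x y
  linarith

lemma exists_riesz [FiniteDimensional ℝ V] (B : LinearMap.BilinForm ℝ V)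
    (W : Submodule ℝ V) (hnd : IsNondegOn B W) (f : V →ₗ[ℝ] ℝ) :
    ∃ w ∈ W, ∀ u ∈ W, B w u = f u := by
  let g : W →ₗ[ℝ] Module.Dual ℝ W := (B.domRestrict₁₂ W W)
  have hinj : Function.Injective g := by
    rw [← LinearMap.ker_eq_bot, LinearMap.ker_eq_bot']
    intro x hx
    apply Subtype.ext
    apply hnd x x.2
    intro y hy
    have := LinearMap.congr_fun hx ⟨y, hy⟩
    exact this
  have hsurj : Function.Surjective g :=
    (LinearMap.injective_iff_surjective_of_finrank_eq_finrank
      (Subspace.dual_finrank_eq).symm).1 hinj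
  obtain ⟨w, hw⟩ := hsurj (f.comp W.subtype)
  refine ⟨w, w.2, fun u hu => ?_⟩
  have := LinearMap.congr_fun hw ⟨u, hu⟩
  exact this

/-- Wedges of vectors of `V₁` span `so(V₁)`. -/
lemma mem_of_wedges [FiniteDimensional ℝ V] (B : LinearMap.BilinForm ℝ V)
    (hsymm : ∀ x y, B x y = B y x) (hnd : ∀ x, (∀ y, B x y = 0) → x = 0)
    (V₁ V₂ : Submodule ℝ V) (hcompl : IsCompl V₁ V₂)
    (horth : ∀ x ∈ V₁, ∀ y ∈ V₂, B x y = 0)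
    (h : Set (Module.End ℝ V)) (hs : IsLieSub h)
    (hw : ∀ a ∈ V₁, ∀ Y ∈ V₁, wedge B a Y ∈ h)
    (A : Module.End ℝ V) (hA : A ∈ soPart B V₁ V₂) : A ∈ h := by
  obtain ⟨hskew, hpres, hzero⟩ := hA
  have hB : B.Nondegenerate :=
    ⟨fun x hx => hnd x hx, fun x hx => hnd x (fun y => by rw [hsymm]; exact hx y)⟩
  let b := Module.finBasis ℝ V
  let d := LinearMap.BilinForm.dualBasis B hB b
  have hd : ∀ z, ∑ i, B (b i) z • d i = z := by
    intro z
    conv_rhs => rw [← d.sum_repr z]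
    refine Finset.sum_congr rfl fun i _ => ?_
    rw [LinearMap.BilinForm.dualBasis_repr_apply, hsymm]
  have hb : ∀ w, ∑ i, B (d i) w • b i = w := by
    intro w
    rw [← sub_eq_zero]
    apply hnd
    intro y
    have h1 : B w y = ∑ i, B (b i) y * B (d i) w := by
      conv_lhs => rw [hsymm, ← hd y]
      simp
    simp only [map_sub, LinearMap.sub_apply, h1, map_sum, LinearMap.sum_apply, map_smul,
      LinearMap.smul_apply, smul_eq_mul]
    rw [sub_eq_zero]
    exact Finset.sum_congr rfl fun i _ => mul_comm _ _
  have hdec : ∀ x : V, ∃ p ∈ V₁, ∃ q ∈ V₂, p + q = x := by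
    intro x
    have : x ∈ V₁ ⊔ V₂ := by rw [hcompl.sup_eq_top]; trivial
    exact Submodule.mem_sup.1 this
  have hA1 : ∀ x, A x ∈ V₁ := by
    intro x
    obtain ⟨p, hp, q, hq, rfl⟩ := hdec x
    rw [map_add, hzero q hq, add_zero]
    exact hpres p hp
  let P : V →ₗ[ℝ] V := V₁.subtype ∘ₗ Submodule.projectionOnto V₁ V₂ hcompl
  have hP1 : ∀ x, P x ∈ V₁ := fun x => Subtype.property _
  have hPid : ∀ x ∈ V₁, P x = x := by
    intro x hx
    have := Submodule.projectionOnto_apply_left hcompl ⟨x, hx⟩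
    exact congrArg V₁.subtype this
  have hP0 : ∀ x ∈ V₂, P x = 0 := by
    intro x hx
    have := Submodule.projectionOnto_apply_right hcompl ⟨x, hx⟩
    exact congrArg V₁.subtype this
  have hPs : ∀ x z, B (P x) z = B x (P z) := by
    intro x z
    obtain ⟨p, hp, q, hq, rfl⟩ := hdec x
    obtain ⟨r, hr, s, hs, rfl⟩ := hdec z
    simp only [map_add, LinearMap.add_apply, hPid p hp, hP0 q hq, hPid r hr, hP0 s hs,
      horth p hp s hs, hsymm q r, horth r hr q hq]
    simp
  have hsum : ∑ i, wedge B (P (b i)) (A (d i)) = (2 : ℝ) • A := by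
    ext z
    simp only [LinearMap.sum_apply, wedge_app, Finset.sum_sub_distrib, LinearMap.smul_apply]
    have e1 : ∑ i, B (P (b i)) z • A (d i) = A z := by
      have : ∑ i, B (P (b i)) z • A (d i) = A (∑ i, B (b i) (P z) • d i) := by
        simp [hPs]
      rw [this, hd]
      obtain ⟨p, hp, q, hq, rfl⟩ := hdec z
      simp [hPid p hp, hP0 q hq, hzero q hq]
    have e2 : ∑ i, B (A (d i)) z • P (b i) = - A z := by
      have : ∑ i, B (A (d i)) z • P (b i) = - P (∑ i, B (d i) (A z) • b i) := by
        simp only [map_sum, map_smul, ← Finset.sum_neg_distrib, ← neg_smul]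
        refine Finset.sum_congr rfl fun i _ => ?_
        rw [eq_neg_of_add_eq_zero_left (hskew (d i) z)]
      rw [this, hb, hPid _ (hA1 z)]
    rw [e1, e2, two_smul, sub_neg_eq_add]
  have hmem : ∑ i, wedge B (P (b i)) (A (d i)) ∈ h := by
    have : ∀ s : Finset (Fin (Module.finrank ℝ V)),
        ∑ i ∈ s, wedge B (P (b i)) (A (d i)) ∈ h := by
      intro s
      induction s using Finset.induction_on with
      | empty => simpa using hs.1
      | insert i s hi ih =>
        rw [Finset.sum_insert hi]
        exact hs.2.1 _ (hw _ (hP1 _) _ (hA1 _)) _ ih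
    exact this _
  rw [hsum] at hmem
  have := hs.2.2.1 (1 / 2 : ℝ) _ hmem
  rwa [smul_smul, show (1 / 2 : ℝ) * 2 = 1 by norm_num, one_smul] at this

/-- Case (i). -/
lemma case_irred [FiniteDimensional ℝ V] (B : LinearMap.BilinForm ℝ V)
    (hsymm : ∀ x y, B x y = B y x) (hnd : ∀ x, (∀ y, B x y = 0) → x = 0)
    (V₁ V₂ : Submodule ℝ V) (hcompl : IsCompl V₁ V₂)
    (horth : ∀ x ∈ V₁, ∀ y ∈ V₂, B x y = 0)
    (h : Set (Module.End ℝ V)) (hs : IsLieSub h) (hh : h ⊆ soPart B V₁ V₂)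
    (hne : h ≠ soPart B V₁ V₂)
    (hirr : ∀ W : Submodule ℝ V, W ≤ V₁ → Invariant h W → W = ⊥ ∨ W = V₁)
    (a : V) (ha : a ∈ V₁) (hw : ∀ Y ∈ V₁, wedge B a Y ∈ h) : a = 0 := by
  let U : Submodule ℝ V :=
    { carrier := {a | a ∈ V₁ ∧ ∀ Y ∈ V₁, wedge B a Y ∈ h}
      zero_mem' := by
        refine ⟨V₁.zero_mem, fun Y _ => ?_⟩
        have : wedge B 0 Y = 0 := by ext z; simp [wedge_app]
        rw [this]; exact hs.1
      add_mem' := by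
        rintro x y ⟨hx, hx'⟩ ⟨hy, hy'⟩
        refine ⟨V₁.add_mem hx hy, fun Y hY => ?_⟩
        have : wedge B (x + y) Y = wedge B x Y + wedge B y Y := by
          ext z
          simp only [wedge_app, map_add, LinearMap.add_apply]
          module
        rw [this]; exact hs.2.1 _ (hx' Y hY) _ (hy' Y hY)
      smul_mem' := by
        rintro c x ⟨hx, hx'⟩
        refine ⟨V₁.smul_mem c hx, fun Y hY => ?_⟩
        have : wedge B (c • x) Y = c • wedge B x Y := by
          ext z
          simp only [wedge_app, map_smul, LinearMap.smul_apply, smul_eq_mul]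
          module
        rw [this]; exact hs.2.2.1 _ _ (hx' Y hY) }
  have hUinv : Invariant h U := by
    rintro F hF x ⟨hx, hx'⟩
    obtain ⟨hsk, hpr, -⟩ := hh hF
    refine ⟨hpr x hx, fun Y hY => ?_⟩
    have : wedge B (F x) Y
        = (F * wedge B x Y - wedge B x Y * F) + (-1 : ℝ) • wedge B x (F Y) := by
      ext z
      have e1 := eq_neg_of_add_eq_zero_left (hsk x z)
      have e2 := eq_neg_of_add_eq_zero_left (hsk Y z)
      simp only [wedge_app, LinearMap.add_apply, LinearMap.sub_apply, Module.End.mul_apply,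
        LinearMap.smul_apply, map_sub, map_smul, e1, e2]
      module
    rw [this]
    exact hs.2.1 _ (hs.2.2.2 _ hF _ (hx' Y hY)) _ (hs.2.2.1 _ _ (hx' _ (hpr Y hY)))
  have haU : a ∈ U := ⟨ha, hw⟩
  rcases hirr U (fun x hx => hx.1) hUinv with h0 | h1
  · rw [h0] at haU; simpa using haU
  · exfalso
    apply hne
    apply Set.Subset.antisymm hh
    intro A hA
    refine mem_of_wedges B hsymm hnd V₁ V₂ hcompl horth h hs ?_ A hA
    intro x hx
    rw [← h1] at hx
    exact hx.2

/-- Case (ii). -/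
lemma case_split [FiniteDimensional ℝ V] (B : LinearMap.BilinForm ℝ V)
    (hsymm : ∀ x y, B x y = B y x)
    (V₁ : Submodule ℝ V) (h : Set (Module.End ℝ V))
    (W : Submodule ℝ V) (hWle : W ≤ V₁) (hW0 : W ≠ ⊥) (hW1 : W ≠ V₁)
    (hWnd : IsNondegOn B W) (hinv : Invariant h W)
    (a : V) (hw : ∀ Y ∈ V₁, wedge B a Y ∈ h) : a = 0 := by
  obtain ⟨v, hv, hvW⟩ : ∃ v ∈ V₁, v ∉ W := by
    by_contra! hc
    exact hW1 (le_antisymm hWle hc)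
  obtain ⟨w, hwW, hwv⟩ := exists_riesz B W hWnd (B v)
  have hperp : ∀ x ∈ W, B a x = 0 := by
    intro x hx
    by_contra hne
    have h1 := hinv _ (hw (v - w) (V₁.sub_mem hv (hWle hwW))) x hx
    have h2 : B (v - w) x = 0 := by simp [hwv x hx]
    rw [wedge_app, h2, zero_smul, sub_zero, Submodule.smul_mem_iff _ hne] at h1
    apply hvW
    have := W.add_mem h1 hwW
    simpa using this
  obtain ⟨z, hz, hzz⟩ := exists_nonnull B hsymm W hW0 hWnd
  have h1 := hinv _ (hw z (hWle hz)) z hz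
  rw [wedge_app, hperp z hz, zero_smul, zero_sub, Submodule.neg_mem_iff,
    Submodule.smul_mem_iff _ hzz] at h1
  exact hWnd a h1 hperp

/-- Skew tensors that are symmetric in the first two slots vanish. -/
lemma koszul (T : V → V → V → ℝ) (V₁ : Submodule ℝ V)
    (h1 : ∀ x ∈ V₁, ∀ y ∈ V₁, ∀ z ∈ V₁, T x y z = T y x z)
    (h2 : ∀ x ∈ V₁, ∀ y ∈ V₁, ∀ z ∈ V₁, T x y z = - T x z y) :
    ∀ x ∈ V₁, ∀ y ∈ V₁, ∀ z ∈ V₁, T x y z = 0 := by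
  intro x hx y hy z hz
  linarith [h1 x hx y hy z hz, h2 y hy x hx z hz, h1 y hy z hz x hx, h2 z hz y hy x hx,
    h1 z hz x hx y hy, h2 x hx z hz y hy]

/-- Let `V = V₁ ⊕ V₂` be a nontrivial orthogonal decomposition of a
pseudo-Euclidean space, `𝔥₁ ⊆ so(V₁)` a subalgebra which is (i) proper and
irreducible, or (ii) preserves a proper nondegenerate subspace of `V₁`, or
(iii) `V₁` is Euclidean and `𝔥₁` is proper, and let `𝔥₂ ⊆ so(V₂)` be arbitrary.
Then `ℛ(𝔥₁ ⊕ 𝔥₂ ⊕ ℝ·id) = ℛ(𝔥₁ ⊕ 𝔥₂)`, `L(ℛ(𝔥₁ ⊕ 𝔥₂ ⊕ ℝ·id)) ⊆ 𝔥₁ ⊕ 𝔥₂`,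
and `𝔥₁ ⊕ 𝔥₂ ⊕ ℝ·id` is not a Berger algebra. -/
theorem conformal_sum_not_Berger
    [FiniteDimensional ℝ V] (B : LinearMap.BilinForm ℝ V)
    (hsymm : ∀ x y, B x y = B y x) (hnd : ∀ x, (∀ y, B x y = 0) → x = 0)
    (V₁ V₂ : Submodule ℝ V) (hcompl : IsCompl V₁ V₂)
    (horth : ∀ x ∈ V₁, ∀ y ∈ V₂, B x y = 0)
    (hV1 : V₁ ≠ ⊥) (hV2 : V₂ ≠ ⊥)
    (hnd1 : IsNondegOn B V₁) (hnd2 : IsNondegOn B V₂)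
    (h₁ h₂ : Set (Module.End ℝ V))
    (hs1 : IsLieSub h₁) (hs2 : IsLieSub h₂)
    (hh1 : h₁ ⊆ soPart B V₁ V₂) (hh2 : h₂ ⊆ soPart B V₂ V₁)
    (hcond :
      (h₁ ≠ soPart B V₁ V₂ ∧
        ∀ W : Submodule ℝ V, W ≤ V₁ → Invariant h₁ W → W = ⊥ ∨ W = V₁) ∨
      (∃ W : Submodule ℝ V, W ≤ V₁ ∧ W ≠ ⊥ ∧ W ≠ V₁ ∧
        IsNondegOn B W ∧ Invariant h₁ W) ∨
      ((∀ x ∈ V₁, x ≠ 0 → 0 < B x x) ∧ h₁ ≠ soPart B V₁ V₂)) :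
    (∀ R, IsCurv {F | ∃ c : ℝ, ∃ A₁ ∈ h₁, ∃ A₂ ∈ h₂,
          F = c • (1 : Module.End ℝ V) + A₁ + A₂} R ↔
        IsCurv {F | ∃ A₁ ∈ h₁, ∃ A₂ ∈ h₂, F = A₁ + A₂} R) ∧
    (curvSpan {F | ∃ c : ℝ, ∃ A₁ ∈ h₁, ∃ A₂ ∈ h₂,
          F = c • (1 : Module.End ℝ V) + A₁ + A₂} : Set (Module.End ℝ V))
        ⊆ {F | ∃ A₁ ∈ h₁, ∃ A₂ ∈ h₂, F = A₁ + A₂} ∧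
    ¬ IsBerger {F | ∃ c : ℝ, ∃ A₁ ∈ h₁, ∃ A₂ ∈ h₂,
          F = c • (1 : Module.End ℝ V) + A₁ + A₂} := by
  have hkey : ∀ a ∈ V₁, (∀ Y ∈ V₁, wedge B a Y ∈ h₁) → a = 0 := by
    intro a ha hw
    rcases hcond with ⟨hne, hirr⟩ | ⟨W, hle, h0, h1, hWnd, hinv⟩ | ⟨hpos, hne⟩
    · exact case_irred B hsymm hnd V₁ V₂ hcompl horth h₁ hs1 hh1 hne hirr a ha hw
    · exact case_split B hsymm V₁ h₁ W hle h0 h1 hWnd hinv a hw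
    · by_cases hirr : ∀ W : Submodule ℝ V, W ≤ V₁ → Invariant h₁ W → W = ⊥ ∨ W = V₁
      · exact case_irred B hsymm hnd V₁ V₂ hcompl horth h₁ hs1 hh1 hne hirr a ha hw
      · push Not at hirr
        obtain ⟨W, hle, hinv, h0, h1⟩ := hirr
        refine case_split B hsymm V₁ h₁ W hle h0 h1 ?_ hinv a hw
        intro x hx hxy
        by_contra hx0
        exact (hpos x (hle hx) hx0).ne' (hxy x hx)
  have hdec : ∀ x : V, ∃ p ∈ V₁, ∃ q ∈ V₂, p + q = x := by
    intro x
    have : x ∈ V₁ ⊔ V₂ := by rw [hcompl.sup_eq_top]; trivial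
    exact Submodule.mem_sup.1 this
  have horth' : ∀ x ∈ V₂, ∀ y ∈ V₁, B x y = 0 := fun x hx y hy => by
    rw [hsymm]; exact horth y hy x hx
  obtain ⟨z1, hz1, hz1n⟩ := exists_nonnull B hsymm V₁ hV1 hnd1
  obtain ⟨z2, hz2, hz2n⟩ := exists_nonnull B hsymm V₂ hV2 hnd2
  have hskew0 : ∀ A ∈ soSet B, ∀ x, B (A x) x = 0 := by
    intro A hA x
    have := hA x x
    rw [hsymm x (A x)] at this
    linarith
  have hiff : ∀ R, IsCurv {F | ∃ c : ℝ, ∃ A₁ ∈ h₁, ∃ A₂ ∈ h₂,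
          F = c • (1 : Module.End ℝ V) + A₁ + A₂} R ↔
        IsCurv {F | ∃ A₁ ∈ h₁, ∃ A₂ ∈ h₂, F = A₁ + A₂} R := by
    intro R
    constructor
    swap
    · rintro ⟨hR1, hR2, hR3⟩
      refine ⟨hR1, fun x y => ?_, hR3⟩
      obtain ⟨A₁, hA1, A₂, hA2, e⟩ := hR2 x y
      exact ⟨0, A₁, hA1, A₂, hA2, by simp [e]⟩
    rintro ⟨hR1, hR2, hR3⟩
    choose c A₁ hA1 A₂ hA2 e using hR2
    have hc : ∀ x y u, B (R x y u) u = c x y * B u u := by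
      intro x y u
      rw [e]
      simp [hskew0 _ (hh1 (hA1 x y)).1, hskew0 _ (hh2 (hA2 x y)).1]
    have hRV1 : ∀ x y, ∀ v ∈ V₁, R x y v = c x y • v + A₁ x y v := by
      intro x y v hv
      rw [e]
      simp [(hh2 (hA2 x y)).2.2 v hv]
    have hRV2 : ∀ x y, ∀ v ∈ V₂, R x y v = c x y • v + A₂ x y v := by
      intro x y v hv
      rw [e]
      simp [(hh1 (hA1 x y)).2.2 v hv]
    have hR1m : ∀ x y, ∀ v ∈ V₁, R x y v ∈ V₁ := by
      intro x y v hv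
      rw [hRV1 x y v hv]
      exact V₁.add_mem (V₁.smul_mem _ hv) ((hh1 (hA1 x y)).2.1 v hv)
    have hR2m : ∀ x y, ∀ v ∈ V₂, R x y v ∈ V₂ := by
      intro x y v hv
      rw [hRV2 x y v hv]
      exact V₂.add_mem (V₂.smul_mem _ hv) ((hh2 (hA2 x y)).2.1 v hv)
    have hcc : ∀ x y, c x y = B (R x y z1) z1 / B z1 z1 := by
      intro x y
      rw [hc, mul_div_cancel_right₀ _ hz1n]
    have hcneg : ∀ x y, c x y = - c y x := by
      intro x y
      rw [hcc, hcc, hR1 x y]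
      simp [neg_div]
    have hcadd1 : ∀ x x' y, c (x + x') y = c x y + c x' y := by
      intro x x' y
      simp only [hcc, map_add, LinearMap.add_apply, add_div]
    have hcadd2 : ∀ x y y', c x (y + y') = c x y + c x y' := by
      intro x y y'
      simp only [hcc, map_add, LinearMap.add_apply, add_div]
    have hc11 : ∀ x ∈ V₁, ∀ y ∈ V₁, c x y = 0 := by
      intro x hx y hy
      have h := congrArg (fun v => B v z2) (hR3 x y z2)
      simp only [map_add, LinearMap.add_apply, map_zero, LinearMap.zero_apply, hc,
        horth _ (hR1m y z2 x hx) z2 hz2, horth _ (hR1m z2 x y hy) z2 hz2, add_zero] at h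
      exact (mul_eq_zero.1 h).resolve_right hz2n
    have hc22 : ∀ x ∈ V₂, ∀ y ∈ V₂, c x y = 0 := by
      intro x hx y hy
      have h := congrArg (fun v => B v z1) (hR3 x y z1)
      simp only [map_add, LinearMap.add_apply, map_zero, LinearMap.zero_apply, hc,
        horth' _ (hR2m y z1 x hx) z1 hz1, horth' _ (hR2m z1 x y hy) z1 hz1, add_zero] at h
      exact (mul_eq_zero.1 h).resolve_right hz1n
    have hc12 : ∀ x ∈ V₁, ∀ Z ∈ V₂, c x Z = 0 := by
      intro x₀ hx₀ Z hZ
      let f : V →ₗ[ℝ] ℝ :=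
        { toFun := fun x => c x Z
          map_add' := fun x y => hcadd1 x y Z
          map_smul' := fun r x => by
            simp only [hcc, map_smul, LinearMap.smul_apply, smul_eq_mul, RingHom.id_apply]
            ring }
      obtain ⟨a, ha, haf⟩ := exists_riesz B V₁ hnd1 f
      have haf' : ∀ u ∈ V₁, B a u = c u Z := haf
      have hsym : ∀ X ∈ V₁, ∀ Y ∈ V₁, R Y Z X = R X Z Y := by
        intro X hX Y hY
        have h := hR3 X Y Z
        rw [hR1 Z X] at h
        have hmem : R Y Z X - R X Z Y ∈ V₁ :=
          V₁.sub_mem (hR1m _ _ _ hX) (hR1m _ _ _ hY)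
        have hmem2 : R Y Z X - R X Z Y ∈ V₂ := by
          have : R Y Z X - R X Z Y = - R X Y Z := by
            rw [LinearMap.neg_apply] at h
            rw [eq_neg_iff_add_eq_zero, ← h]
            abel
          rw [this]
          exact V₂.neg_mem (hR2m _ _ _ hZ)
        exact sub_eq_zero.1 (Submodule.disjoint_def.1 hcompl.disjoint _ hmem hmem2)
      have hT := koszul (fun Y X u => B (A₁ Y Z X - wedge B a Y X) u) V₁
        (by
          intro Y hY X hX u hu
          have h := hsym X hX Y hY
          rw [hRV1 _ _ _ hX, hRV1 _ _ _ hY] at h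
          have : A₁ Y Z X - wedge B a Y X = A₁ X Z Y - wedge B a X Y := by
            rw [wedge_app, wedge_app, haf' X hX, haf' Y hY, hsymm Y X]
            rw [← eq_sub_iff_add_eq'] at h
            rw [h]
            abel
          simp only [this])
        (by
          intro Y hY X hX u hu
          have h := (hh1 (hA1 Y Z)).1 X u
          rw [hsymm X] at h
          simp only [wedge_app, map_sub, LinearMap.sub_apply, map_smul, LinearMap.smul_apply,
            smul_eq_mul]
          linarith)
      have hmem : ∀ Y ∈ V₁, wedge B a Y ∈ h₁ := by
        intro Y hY
        have : wedge B a Y = A₁ Y Z := by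
          ext x
          obtain ⟨p, hp, q, hq, rfl⟩ := hdec x
          have hq0 : wedge B a Y q = 0 := by
            rw [wedge_app, horth a ha q hq, horth Y hY q hq]; simp
          have hpp : A₁ Y Z p - wedge B a Y p = 0 := by
            refine hnd1 _ ?_ (fun u hu => hT Y hY p hp u hu)
            refine V₁.sub_mem ((hh1 (hA1 Y Z)).2.1 p hp) ?_
            rw [wedge_app]
            exact V₁.sub_mem (V₁.smul_mem _ hY) (V₁.smul_mem _ ha)
          rw [map_add, map_add, hq0, (hh1 (hA1 Y Z)).2.2 q hq, ← sub_eq_zero.1 hpp]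
        rw [this]
        exact hA1 Y Z
      have ha0 := hkey a ha hmem
      rw [← haf' x₀ hx₀, ha0]
      simp
    have hc0 : ∀ x y, c x y = 0 := by
      intro x y
      obtain ⟨p, hp, q, hq, rfl⟩ := hdec x
      obtain ⟨r, hr, s, hs, rfl⟩ := hdec y
      rw [hcadd1, hcadd2, hcadd2, hc11 p hp r hr, hc12 p hp s hs, hcneg q r, hc12 r hr q hq,
        hc22 q hq s hs]
      simp
    refine ⟨hR1, fun x y => ⟨A₁ x y, hA1 x y, A₂ x y, hA2 x y, ?_⟩, hR3⟩
    rw [e, hc0]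
    simp
  have hsub : (curvSpan {F | ∃ c : ℝ, ∃ A₁ ∈ h₁, ∃ A₂ ∈ h₂,
          F = c • (1 : Module.End ℝ V) + A₁ + A₂} : Set (Module.End ℝ V))
        ⊆ {F | ∃ A₁ ∈ h₁, ∃ A₂ ∈ h₂, F = A₁ + A₂} := by
    intro F hF
    change F ∈ Submodule.span ℝ _ at hF
    induction hF using Submodule.span_induction with
    | mem F hF =>
      obtain ⟨R, hR, x, y, rfl⟩ := hF
      exact ((hiff R).1 hR).2.1 x y
    | zero => exact ⟨0, hs1.1, 0, hs2.1, by simp⟩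
    | add F G _ _ hF hG =>
      obtain ⟨A, hA, A', hA', rfl⟩ := hF
      obtain ⟨C, hC, C', hC', rfl⟩ := hG
      exact ⟨A + C, hs1.2.1 _ hA _ hC, A' + C', hs2.2.1 _ hA' _ hC', by abel⟩
    | smul r F _ hF =>
      obtain ⟨A, hA, A', hA', rfl⟩ := hF
      exact ⟨r • A, hs1.2.2.1 _ _ hA, r • A', hs2.2.2.1 _ _ hA', by rw [smul_add]⟩
  refine ⟨hiff, hsub, fun hBer => ?_⟩
  have hid : (1 : Module.End ℝ V) ∈ {F | ∃ c : ℝ, ∃ A₁ ∈ h₁, ∃ A₂ ∈ h₂,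
          F = c • (1 : Module.End ℝ V) + A₁ + A₂} :=
    ⟨1, 0, hs1.1, 0, hs2.1, by simp⟩
  unfold IsBerger at hBer
  rw [← hBer] at hid
  obtain ⟨A, hA, A', hA', hAA⟩ := hsub hid
  apply hz1n
  have h := congrArg (fun F : Module.End ℝ V => B (F z1) z1) hAA
  simpa [hskew0 _ (hh1 hA).1, hskew0 _ (hh2 hA').1] using h

end Weyl
end
end

section
/- Let 𝔤 ⊆ co(1,n+1)_{ℝp} be a subalgebra that is a Berger algebra (with respect to its action on ℝ^{1,n+1}), and let 𝔥 := pr_{so(n)}𝔤 ⊆ so(n) be its projection to the so(n)-component, i.e. 𝔥 = {A : (b,a,A,X) ∈ 𝔤 for some b,a,X}. Then 𝔥 is spanned by the set {S(U,V) : S ∈ ℛ(𝔥), U,V ∈ ℝⁿ} ∪ {P(U) : P ∈ 𝒫(𝔥), U ∈ ℝⁿ}; in particular 𝔥 is a weak Berger algebra (equivalently, by Leistner's theorem, the holonomy algebra of a Riemannian manifold). -/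
open Module

noncomputable section

namespace Weyl

variable {V : Type*} [AddCommGroup V] [Module ℝ V]

/-- The Euclidean dot product on `Fin n → ℝ`. -/
def dotE (n : ℕ) : LinearMap.BilinForm ℝ (Fin n → ℝ) :=
  LinearMap.mk₂ ℝ (fun x y => ∑ i, x i * y i)
    (fun x x' y => by simp [add_mul, Finset.sum_add_distrib])
    (fun c x y => by simp [Finset.mul_sum, mul_assoc])
    (fun x y y' => by simp [mul_add, Finset.sum_add_distrib])
    (fun c x y => by
      simp only [Pi.smul_apply, smul_eq_mul, Finset.mul_sum]
      exact Finset.sum_congr rfl fun i _ => by ring)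

/-- Minkowski space `ℝ^{1,n+1}` in Witt coordinates: the vector `(v, x, u)`
represents `v·p + x + u·q` with respect to a Witt basis `p, e₁, …, eₙ, q`. -/
abbrev Mink (n : ℕ) := ℝ × (Fin n → ℝ) × ℝ

/-- The Minkowski metric in Witt coordinates: `p, q` are isotropic, `(p,q) = 1`,
and the form is the Euclidean one on the `ℝⁿ`-part orthogonal to `p` and `q`. -/
def minkB (n : ℕ) : LinearMap.BilinForm ℝ (Mink n) :=
  LinearMap.mk₂ ℝ (fun X Y => X.1 * Y.2.2 + X.2.2 * Y.1 + dotE n X.2.1 Y.2.1)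
    (fun X X' Y => by
      simp only [Prod.fst_add, Prod.snd_add, Pi.add_apply, map_add,
        LinearMap.add_apply]
      ring)
    (fun c X Y => by
      simp only [Prod.smul_fst, Prod.smul_snd, smul_eq_mul, map_smul,
        LinearMap.smul_apply]
      ring)
    (fun X Y Y' => by
      simp only [Prod.fst_add, Prod.snd_add, Pi.add_apply, map_add,
        LinearMap.add_apply]
      ring)
    (fun c X Y => by
      simp only [Prod.smul_fst, Prod.smul_snd, smul_eq_mul, map_smul,
        LinearMap.smul_apply]
      ring)

/-- The Witt basis vector `p`. -/
def pvec (n : ℕ) : Mink n := (1, 0, 0)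

/-- The Witt basis vector `q`. -/
def qvec (n : ℕ) : Mink n := (0, 0, 1)

/-- The embedding of `ℝⁿ` into Minkowski space. -/
def emb {n : ℕ} (x : Fin n → ℝ) : Mink n := (0, x, 0)

/-- The element `(b, a, A, X) = b·id + (a, A, X)` of `co(1,n+1)_{ℝp}`:
it maps `p ↦ (a+b)·p`, `U ↦ (X,U)·p + A U + b·U` for `U ∈ ℝⁿ`, and
`q ↦ −X + (b−a)·q`. -/
def coElem {n : ℕ} (b a : ℝ) (A : Module.End ℝ (Fin n → ℝ)) (X : Fin n → ℝ) :
    Module.End ℝ (Mink n) where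
  toFun w := ((b + a) * w.1 + dotE n X w.2.1,
              b • w.2.1 + A w.2.1 - w.2.2 • X,
              (b - a) * w.2.2)
  map_add' w w' := by
    simp only [Prod.fst_add, Prod.snd_add, map_add, Prod.mk_add_mk, add_smul]
    refine Prod.ext (by ring) (Prod.ext ?_ (by ring))
    simp only [smul_add]
    abel
  map_smul' c w := by
    simp only [Prod.smul_fst, Prod.smul_snd, smul_eq_mul, map_smul,
      RingHom.id_apply, Prod.smul_mk]
    refine Prod.ext (by simp; ring) (Prod.ext ?_ (by simp; ring))
    simp only [smul_smul, smul_sub, LinearMap.map_smul]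
    rw [mul_comm]
    module

/-- The Lie algebra `so(n)` of skew-symmetric endomorphisms of Euclidean `ℝⁿ`. -/
def soE (n : ℕ) : Set (Module.End ℝ (Fin n → ℝ)) := soSet (dotE n)

/-- The subalgebra `co(1,n+1)_{ℝp}` of `co(1,n+1)` preserving the isotropic line `ℝp`,
whose elements are written `(b, a, A, X)`. -/
def coRp (n : ℕ) : Set (Module.End ℝ (Mink n)) :=
  {F | ∃ b a : ℝ, ∃ A ∈ soE n, ∃ X : Fin n → ℝ, F = coElem b a A X}

/-- `P` is a weak curvature tensor of type `h ⊆ so(n)`. -/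
def IsWeakCurv (n : ℕ) (h : Set (Module.End ℝ (Fin n → ℝ)))
    (P : (Fin n → ℝ) →ₗ[ℝ] Module.End ℝ (Fin n → ℝ)) : Prop :=
  (∀ x, P x ∈ h) ∧
    ∀ x y z, dotE n (P x y) z + dotE n (P y z) x + dotE n (P z x) y = 0

/-- The span of all values of weak curvature tensors of type `h`. -/
def weakSpan (n : ℕ) (h : Set (Module.End ℝ (Fin n → ℝ))) :
    Submodule ℝ (Module.End ℝ (Fin n → ℝ)) :=
  Submodule.span ℝ {A | ∃ P, IsWeakCurv n h P ∧ ∃ U, A = P U}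

/-- `h ⊆ so(n)` is a weak Berger algebra (equivalently, by Leistner's theorem,
the holonomy algebra of a Riemannian manifold). -/
def IsWeakBerger (n : ℕ) (h : Set (Module.End ℝ (Fin n → ℝ))) : Prop :=
  (weakSpan n h : Set (Module.End ℝ (Fin n → ℝ))) = h

/-- `S ∈ ℛ(𝔥)`: an algebraic curvature tensor of type `𝔥 ⊆ so(n)` on `ℝⁿ`. -/
def IsCurvE (n : ℕ) (h : Set (Module.End ℝ (Fin n → ℝ)))
    (S : (Fin n → ℝ) →ₗ[ℝ] (Fin n → ℝ) →ₗ[ℝ] Module.End ℝ (Fin n → ℝ)) : Prop :=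
  (∀ x y, S x y = - S y x) ∧ (∀ x y, S x y ∈ h) ∧
    ∀ x y z, S x y z + S y z x + S z x y = 0

/-- The projection of `𝔤 ⊆ co(1,n+1)_{ℝp}` to its `so(n)`-component. -/
def prSoN (n : ℕ) (g : Set (Module.End ℝ (Mink n))) :
    Set (Module.End ℝ (Fin n → ℝ)) :=
  {A | A ∈ soE n ∧ ∃ b a : ℝ, ∃ X : Fin n → ℝ, coElem b a A X ∈ g}

/-- linear extraction of `b`. -/
def bL (n : ℕ) : Module.End ℝ (Mink n) →ₗ[ℝ] ℝ where
  toFun F := ((F (pvec n)).1 + (F (qvec n)).2.2) / 2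
  map_add' F G := by simp; ring
  map_smul' c F := by simp; ring

/-- linear extraction of `a`. -/
def aL (n : ℕ) : Module.End ℝ (Mink n) →ₗ[ℝ] ℝ where
  toFun F := ((F (pvec n)).1 - (F (qvec n)).2.2) / 2
  map_add' F G := by simp; ring
  map_smul' c F := by simp; ring

/-- linear extraction of `X`. -/
def XL (n : ℕ) : Module.End ℝ (Mink n) →ₗ[ℝ] (Fin n → ℝ) where
  toFun F := - (F (qvec n)).2.1
  map_add' F G := by simp; abel
  map_smul' c F := by simp

/-- The embedding as a linear map. -/
def embL (n : ℕ) : (Fin n → ℝ) →ₗ[ℝ] Mink n where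
  toFun x := emb x
  map_add' x y := by simp [emb]
  map_smul' c x := by simp [emb]

/-- linear extraction of `A`. -/
def AL (n : ℕ) : Module.End ℝ (Mink n) →ₗ[ℝ] Module.End ℝ (Fin n → ℝ) where
  toFun F := (LinearMap.fst ℝ (Fin n → ℝ) ℝ ∘ₗ LinearMap.snd ℝ ℝ ((Fin n → ℝ) × ℝ)) ∘ₗ F ∘ₗ embL n
    - bL n F • LinearMap.id
  map_add' F G := by
    apply LinearMap.ext; intro x
    simp [add_smul]; abel
  map_smul' c F := by
    apply LinearMap.ext; intro x
    simp [mul_smul, smul_sub]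

lemma dotE_comm (n : ℕ) (x y : Fin n → ℝ) : dotE n x y = dotE n y x := by
  simp [dotE, mul_comm]

lemma coElem_apply {n : ℕ} (b a : ℝ) (A : Module.End ℝ (Fin n → ℝ)) (X : Fin n → ℝ) (w : Mink n) :
    coElem b a A X w = ((b + a) * w.1 + dotE n X w.2.1,
              b • w.2.1 + A w.2.1 - w.2.2 • X, (b - a) * w.2.2) := rfl

section ex
variable {n : ℕ} (b a : ℝ) (A : Module.End ℝ (Fin n → ℝ)) (X : Fin n → ℝ)

lemma bL_co : bL n (coElem b a A X) = b := by
  simp [bL, coElem_apply, pvec, qvec]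

lemma aL_co : aL n (coElem b a A X) = a := by
  simp [aL, coElem_apply, pvec, qvec]

lemma XL_co : XL n (coElem b a A X) = X := by
  simp [XL, coElem_apply, qvec]

lemma AL_co : AL n (coElem b a A X) = A := by
  apply LinearMap.ext; intro x
  have : AL n (coElem b a A X) x = (coElem b a A X (emb x)).2.1 - bL n (coElem b a A X) • x := rfl
  rw [this, bL_co]
  simp [coElem_apply, emb]

end ex

lemma co_eq {n : ℕ} {F : Module.End ℝ (Mink n)} (hF : F ∈ coRp n) :
    AL n F ∈ soE n ∧ F = coElem (bL n F) (aL n F) (AL n F) (XL n F) := by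
  obtain ⟨b, a, A, hA, X, rfl⟩ := hF
  rw [bL_co, aL_co, AL_co, XL_co]
  exact ⟨hA, rfl⟩

lemma co_fst {n : ℕ} {F : Module.End ℝ (Mink n)} (hF : F ∈ coRp n) (w : Mink n) :
    (F w).1 = (bL n F + aL n F) * w.1 + dotE n (XL n F) w.2.1 := by
  conv_lhs => rw [(co_eq hF).2]
  rfl

lemma co_snd {n : ℕ} {F : Module.End ℝ (Mink n)} (hF : F ∈ coRp n) (w : Mink n) :
    (F w).2.2 = (bL n F - aL n F) * w.2.2 := by
  conv_lhs => rw [(co_eq hF).2]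
  rfl

lemma co_mid {n : ℕ} {F : Module.End ℝ (Mink n)} (hF : F ∈ coRp n) (w : Mink n) (W : Fin n → ℝ) :
    dotE n (F w).2.1 W = bL n F * dotE n w.2.1 W + dotE n (AL n F w.2.1) W
      - w.2.2 * dotE n (XL n F) W := by
  conv_lhs => rw [(co_eq hF).2]
  simp [coElem_apply]

lemma prSoN_iff {n : ℕ} {g : Set (Module.End ℝ (Mink n))} (hg : g ⊆ coRp n)
    (A : Module.End ℝ (Fin n → ℝ)) : A ∈ prSoN n g ↔ ∃ F ∈ g, AL n F = A := by
  constructor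
  · rintro ⟨_, b, a, X, h⟩
    exact ⟨_, h, AL_co _ _ _ _⟩
  · rintro ⟨F, hF, rfl⟩
    have := co_eq (hg hF)
    exact ⟨this.1, _, _, _, this.2 ▸ hF⟩

section curv
variable {n : ℕ} {g : Set (Module.End ℝ (Mink n))} (hg : g ⊆ coRp n)
  {R : Mink n →ₗ[ℝ] Mink n →ₗ[ℝ] Module.End ℝ (Mink n)} (hR : IsCurv g R)
include hg hR

lemma bi_fst (x y z : Mink n) :
    (bL n (R x y) + aL n (R x y)) * z.1 + dotE n (XL n (R x y)) z.2.1
    + ((bL n (R y z) + aL n (R y z)) * x.1 + dotE n (XL n (R y z)) x.2.1)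
    + ((bL n (R z x) + aL n (R z x)) * y.1 + dotE n (XL n (R z x)) y.2.1) = 0 := by
  have := congrArg Prod.fst (hR.2.2 x y z)
  simp only [Prod.fst_add] at this
  rw [co_fst (hg (hR.2.1 _ _)), co_fst (hg (hR.2.1 _ _)), co_fst (hg (hR.2.1 _ _))] at this
  exact this

lemma bi_snd (x y z : Mink n) :
    (bL n (R x y) - aL n (R x y)) * z.2.2
    + (bL n (R y z) - aL n (R y z)) * x.2.2
    + (bL n (R z x) - aL n (R z x)) * y.2.2 = 0 := by
  have := congrArg (fun v : Mink n => v.2.2) (hR.2.2 x y z)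
  simp only [Prod.snd_add] at this
  rw [co_snd (hg (hR.2.1 _ _)), co_snd (hg (hR.2.1 _ _)), co_snd (hg (hR.2.1 _ _))] at this
  exact this

lemma bi_mid (x y z : Mink n) (W : Fin n → ℝ) :
    (bL n (R x y) * dotE n z.2.1 W + dotE n (AL n (R x y) z.2.1) W - z.2.2 * dotE n (XL n (R x y)) W)
    + (bL n (R y z) * dotE n x.2.1 W + dotE n (AL n (R y z) x.2.1) W
        - x.2.2 * dotE n (XL n (R y z)) W)
    + (bL n (R z x) * dotE n y.2.1 W + dotE n (AL n (R z x) y.2.1) W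
        - y.2.2 * dotE n (XL n (R z x)) W) = 0 := by
  have := congrArg (fun v : Mink n => dotE n v.2.1 W) (hR.2.2 x y z)
  simp only [Prod.snd_add, Prod.fst_add, map_add, LinearMap.add_apply] at this
  rw [co_mid (hg (hR.2.1 _ _)), co_mid (hg (hR.2.1 _ _)), co_mid (hg (hR.2.1 _ _))] at this
  simpa using this

lemma sk (x y : Mink n) (U V : Fin n → ℝ) :
    dotE n (AL n (R x y) U) V = - dotE n (AL n (R x y) V) U := by
  have := (co_eq (hg (hR.2.1 x y))).1 U V
  rw [dotE_comm n U] at this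
  linarith

omit hg in
lemma an_A (x y : Mink n) (U V : Fin n → ℝ) :
    dotE n (AL n (R x y) U) V = - dotE n (AL n (R y x) U) V := by
  rw [hR.1 x y]; simp

omit hg in
lemma an_X (x y : Mink n) (V : Fin n → ℝ) :
    dotE n (XL n (R x y)) V = - dotE n (XL n (R y x)) V := by
  rw [hR.1 x y]; simp

omit hg in
lemma an_b (x y : Mink n) : bL n (R x y) = - bL n (R y x) := by
  rw [hR.1 x y]; simp

omit hg in
lemma an_a (x y : Mink n) : aL n (R x y) = - aL n (R y x) := by
  rw [hR.1 x y]; simp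

lemma A_mem (x y : Mink n) : AL n (R x y) ∈ prSoN n g :=
  (prSoN_iff hg _).2 ⟨_, hR.2.1 x y, rfl⟩

/-- `A(q,·) ∈ 𝒫(𝔥)`. -/
lemma P_q : IsWeakCurv n (prSoN n g) (AL n ∘ₗ R (qvec n) ∘ₗ embL n) := by
  refine ⟨fun x => A_mem hg hR _ _, fun x y z => ?_⟩
  change dotE n (AL n (R (qvec n) (emb x)) y) z + dotE n (AL n (R (qvec n) (emb y)) z) x
    + dotE n (AL n (R (qvec n) (emb z)) x) y = 0
  have key : ∀ x y z : Fin n → ℝ, dotE n (XL n (R (emb x) (emb y))) z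
      = bL n (R (qvec n) (emb x)) * dotE n y z - bL n (R (qvec n) (emb y)) * dotE n x z
        + dotE n (AL n (R (qvec n) (emb x)) y) z - dotE n (AL n (R (qvec n) (emb y)) x) z := by
    intro x y z
    have h := bi_mid hg hR (qvec n) (emb x) (emb y) z
    rw [an_b hR (emb y), an_A hR (emb y)] at h
    simp [qvec, emb] at h ⊢
    linarith
  have h := bi_fst hg hR (emb x) (emb y) (emb z)
  have h' : dotE n (XL n (R (emb x) (emb y))) z + dotE n (XL n (R (emb y) (emb z))) x
    + dotE n (XL n (R (emb z) (emb x))) y = 0 := by simpa [emb] using h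
  rw [key, key, key] at h'
  have s := sk hg hR (qvec n)
  rw [s (emb y) x z, s (emb z) y x, s (emb x) z y, dotE_comm n y x, dotE_comm n z x,
    dotE_comm n z y] at h'
  linarith

/-- `A(p,·) ∈ 𝒫(𝔥)`. -/
lemma P_p : IsWeakCurv n (prSoN n g) (AL n ∘ₗ R (pvec n) ∘ₗ embL n) := by
  refine ⟨fun x => A_mem hg hR _ _, fun x y z => ?_⟩
  change dotE n (AL n (R (pvec n) (emb x)) y) z + dotE n (AL n (R (pvec n) (emb y)) z) x
    + dotE n (AL n (R (pvec n) (emb z)) x) y = 0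
  have key : ∀ x y z : Fin n → ℝ, 0
      = bL n (R (pvec n) (emb x)) * dotE n y z - bL n (R (pvec n) (emb y)) * dotE n x z
        + dotE n (AL n (R (pvec n) (emb x)) y) z - dotE n (AL n (R (pvec n) (emb y)) x) z := by
    intro x y z
    have h := bi_mid hg hR (pvec n) (emb x) (emb y) z
    rw [an_b hR (emb y), an_A hR (emb y)] at h
    simp [pvec, emb] at h ⊢
    linarith
  have h1 := key x y z
  have h2 := key y z x
  have h3 := key z x y
  have s := sk hg hR (pvec n)
  rw [s (emb y) x z] at h1
  rw [s (emb z) y x, dotE_comm n z x, dotE_comm n y x] at h2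
  rw [s (emb x) z y, dotE_comm n z y] at h3
  linarith

/-- `b(U,V) = (A(p,q)U,V)`. -/
lemma b_eq (U V : Fin n → ℝ) :
    bL n (R (emb U) (emb V)) = dotE n (AL n (R (pvec n) (qvec n)) U) V := by
  have h1 : ∀ U V : Fin n → ℝ, dotE n (XL n (R (pvec n) (emb U))) V =
      - (bL n (R (pvec n) (qvec n)) * dotE n U V) - dotE n (AL n (R (pvec n) (qvec n)) U) V := by
    intro U V
    have h := bi_mid hg hR (pvec n) (qvec n) (emb U) V
    rw [an_X hR (emb U)] at h
    simp [pvec, qvec, emb] at h ⊢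
    linarith
  have h2 := bi_snd hg hR (qvec n) (emb U) (emb V)
  have h3 := bi_fst hg hR (pvec n) (emb U) (emb V)
  rw [an_X hR (emb V)] at h3
  have h3' : dotE n (XL n (R (pvec n) (emb U))) V
    + (bL n (R (emb U) (emb V)) + aL n (R (emb U) (emb V)))
    - dotE n (XL n (R (pvec n) (emb V))) U = 0 := by
    simp [pvec, emb] at h3 ⊢
    linarith
  have h2' : bL n (R (emb U) (emb V)) - aL n (R (emb U) (emb V)) = 0 := by
    simpa [qvec, emb] using h2
  rw [h1, h1, sk hg hR _ _ V U, dotE_comm n V U] at h3'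
  linarith

omit hR in
lemma pr_sub (hsub : IsLieSub g) {A B : Module.End ℝ (Fin n → ℝ)} (hA : A ∈ prSoN n g)
    (hB : B ∈ prSoN n g) (c : ℝ) : A - c • B ∈ prSoN n g := by
  rw [prSoN_iff hg] at *
  obtain ⟨F, hF, rfl⟩ := hA
  obtain ⟨G, hG, rfl⟩ := hB
  refine ⟨F + (-c) • G, hsub.2.1 _ hF _ (hsub.2.2.1 _ _ hG), ?_⟩
  rw [map_add, map_smul]
  apply LinearMap.ext; intro x
  simp only [LinearMap.add_apply, LinearMap.sub_apply, LinearMap.smul_apply]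
  module

/-- `A(·,Z) - (·,Z)A(p,q) ∈ 𝒫(𝔥)`. -/
lemma P_Z (hsub : IsLieSub g) (Z : Fin n → ℝ) : IsWeakCurv n (prSoN n g)
    (AL n ∘ₗ (R.flip (emb Z)) ∘ₗ embL n
      - (dotE n Z).smulRight (AL n (R (pvec n) (qvec n)))) := by
  refine ⟨fun x => ?_, fun x y w => ?_⟩
  · change AL n (R (emb x) (emb Z)) - dotE n Z x • AL n (R (pvec n) (qvec n)) ∈ _
    exact pr_sub hg hsub (A_mem hg hR _ _) (A_mem hg hR _ _) _
  have e : ∀ x y w : Fin n → ℝ, dotE n ((AL n ∘ₗ (R.flip (emb Z)) ∘ₗ embL n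
      - (dotE n Z).smulRight (AL n (R (pvec n) (qvec n)))) x y) w =
      dotE n (AL n (R (emb x) (emb Z)) y) w - dotE n x Z * bL n (R (emb y) (emb w)) := by
    intro x y w
    rw [b_eq hg hR, dotE_comm n x Z]
    simp
    rfl
  rw [e, e, e]
  have B : ∀ x y z w : Fin n → ℝ,
      dotE n (AL n (R (emb x) (emb y)) z) w + dotE n (AL n (R (emb y) (emb z)) x) w
      + dotE n (AL n (R (emb z) (emb x)) y) w = 
      - (bL n (R (emb x) (emb y)) * dotE n z w + bL n (R (emb y) (emb z)) * dotE n x w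
      + bL n (R (emb z) (emb x)) * dotE n y w) := by
    intro x y z w
    have h := bi_mid hg hR (emb x) (emb y) (emb z) w
    simp [emb] at h ⊢
    linarith
  have E1 := B x y w Z
  have E2 := B x y Z w
  have E3 := B y w Z x
  have E4 := B w x Z y
  have s := fun x y => sk hg hR (emb x) (emb y)
  have a := fun x y => an_A hR (emb x) (emb y)
  have ab := fun x y => an_b hR (emb x) (emb y)
  rw [s x y Z w, a Z x, s y Z x w, ab Z x, dotE_comm n Z w] at E2
  rw [s y w Z x, a Z y, s w Z y x, ab Z y, dotE_comm n Z x, dotE_comm n w x, dotE_comm n y x] at E3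
  rw [s w x Z y, a Z w, s x Z w y, ab Z w, dotE_comm n Z y, dotE_comm n w y] at E4
  linarith

lemma curv_mem (hsub : IsLieSub g) (x y : Mink n) :
    AL n (R x y) ∈ weakSpan n (prSoN n g) := by
  have mem : ∀ P, IsWeakCurv n (prSoN n g) P → ∀ U, P U ∈ weakSpan n (prSoN n g) :=
    fun P hP U => Submodule.subset_span ⟨P, hP, U, rfl⟩
  have hq : ∀ U, AL n (R (qvec n) (emb U)) ∈ weakSpan n (prSoN n g) :=
    fun U => mem _ (P_q hg hR) U
  have hp : ∀ U, AL n (R (pvec n) (emb U)) ∈ weakSpan n (prSoN n g) :=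
    fun U => mem _ (P_p hg hR) U
  have hZ : ∀ U Z, AL n (R (emb U) (emb Z)) - dotE n Z U • AL n (R (pvec n) (qvec n))
      ∈ weakSpan n (prSoN n g) :=
    fun U Z => mem _ (P_Z hg hR hsub Z) U
  have self : ∀ v, R v v = 0 := by
    intro v
    have h := hR.1 v v
    apply LinearMap.ext; intro w
    exact self_eq_neg.1 (LinearMap.congr_fun h w)
  have h0 : AL n (R (pvec n) (qvec n)) ∈ weakSpan n (prSoN n g) := by
    rcases Nat.eq_zero_or_pos n with rfl | hn
    · have : AL 0 (R (pvec 0) (qvec 0)) = 0 := by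
        apply LinearMap.ext; intro x; exact Subsingleton.elim _ _
      rw [this]; exact zero_mem _
    · let v : Fin n → ℝ := Pi.single ⟨0, hn⟩ 1
      have h := hZ v v
      have hv : dotE n v v = 1 := by simp [dotE, v, Pi.single_apply]
      rw [self, hv, map_zero, zero_sub, one_smul] at h
      simpa using h
  have hUV : ∀ U Z, AL n (R (emb U) (emb Z)) ∈ weakSpan n (prSoN n g) := by
    intro U Z
    have := add_mem (hZ U Z) (Submodule.smul_mem _ (dotE n Z U) h0)
    simpa using this
  have sw : ∀ v w, AL n (R v w) ∈ weakSpan n (prSoN n g) →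
      AL n (R w v) ∈ weakSpan n (prSoN n g) := by
    intro v w h
    rw [hR.1 w v, map_neg]; exact neg_mem h
  have dec : ∀ v : Mink n, v = v.1 • pvec n + emb v.2.1 + v.2.2 • qvec n := by
    intro v
    simp [pvec, qvec, emb]
  have lin : ∀ v, AL n (R v (pvec n)) ∈ weakSpan n (prSoN n g) →
      (∀ U, AL n (R v (emb U)) ∈ weakSpan n (prSoN n g)) →
      AL n (R v (qvec n)) ∈ weakSpan n (prSoN n g) →
      ∀ w, AL n (R v w) ∈ weakSpan n (prSoN n g) := by
    intro v h1 h2 h3 w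
    rw [dec w]
    simp only [map_add, map_smul]
    exact add_mem (add_mem (Submodule.smul_mem _ _ h1) (h2 _)) (Submodule.smul_mem _ _ h3)
  have z : ∀ v, AL n (R v v) ∈ weakSpan n (prSoN n g) := by
    intro v; rw [self, map_zero]; exact zero_mem _
  have l1 := lin (pvec n) (z _) hp h0
  have l2 := lin (qvec n) (sw _ _ h0) hq (z _)
  have l3 := fun U => lin (emb U) (sw _ _ (hp U)) (hUV U) (sw _ _ (hq U))
  exact lin x (sw _ _ (l1 x)) (fun U => sw _ _ (l3 U x)) (sw _ _ (l2 x)) y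

end curv

/-- If `𝔤 ⊆ co(1,n+1)_{ℝp}` is a Berger algebra, then its projection
`𝔥 = pr_{so(n)} 𝔤` is spanned by the values of the tensors `S ∈ ℛ(𝔥)` and
`P ∈ 𝒫(𝔥)`; in particular `𝔥` is a weak Berger algebra (equivalently, by
Leistner's theorem, the holonomy algebra of a Riemannian manifold). -/
theorem projection_weak_Berger (n : ℕ) (g : Set (Module.End ℝ (Mink n)))
    (hsub : IsLieSub g) (hg : g ⊆ coRp n) (hB : IsBerger g) :
    (Submodule.span ℝ
        ({A | ∃ S, IsCurvE n (prSoN n g) S ∧ ∃ U W : Fin n → ℝ, A = S U W} ∪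
         {A | ∃ P, IsWeakCurv n (prSoN n g) P ∧ ∃ U : Fin n → ℝ, A = P U}) :
        Set (Module.End ℝ (Fin n → ℝ))) = prSoN n g ∧
    IsWeakBerger n (prSoN n g) := by
  have hh : ((Submodule.map (AL n) (curvSpan g) : Submodule ℝ _) :
      Set (Module.End ℝ (Fin n → ℝ))) = prSoN n g := by
    ext A
    rw [prSoN_iff hg, Submodule.map_coe, hB]
    rfl
  have hweak : Submodule.map (AL n) (curvSpan g) = weakSpan n (prSoN n g) := by
    apply le_antisymm
    · rw [curvSpan, Submodule.map_span_le]
      rintro F ⟨R, hR, x, y, rfl⟩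
      exact curv_mem hg hR hsub x y
    · refine Submodule.span_le.2 ?_
      rintro A ⟨P, hP, U, rfl⟩
      rw [hh]; exact hP.1 U
  have hW : IsWeakBerger n (prSoN n g) := by
    unfold IsWeakBerger
    rw [← hweak, hh]
  refine ⟨?_, hW⟩
  have : Submodule.span ℝ
        ({A | ∃ S, IsCurvE n (prSoN n g) S ∧ ∃ U W : Fin n → ℝ, A = S U W} ∪
         {A | ∃ P, IsWeakCurv n (prSoN n g) P ∧ ∃ U : Fin n → ℝ, A = P U})
      = weakSpan n (prSoN n g) := by
    apply le_antisymm
    · refine Submodule.span_le.2 ?_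
      rintro A (⟨S, hS, U, W, rfl⟩ | ⟨P, hP, U, rfl⟩)
      · rw [hW]; exact hS.2.1 U W
      · exact Submodule.subset_span ⟨P, hP, U, rfl⟩
    · exact Submodule.span_mono Set.subset_union_right
  rw [this]; exact hW

end Weyl
end
end
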